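/- Let q₀ : ℝ → ℂ, let c ∈ ℝ and let j ∈ ℕ satisfy the hypotheses: q₀ is (j+1)-times continuously differentiable on (−∞, c) and on (c, ∞); for every m with 0 ≤ m ≤ j+1 the restriction of q₀⁽ᵐ⁾ to each of (−∞, c) and (c, ∞) is integrable; for every m with 0 ≤ m ≤ j the one-sided limits q₀⁽ᵐ⁾(c⁻) and q₀⁽ᵐ⁾(c⁺) exist and q₀⁽ᵐ⁾(x) → 0 as x → ±∞; and q₀⁽ᵐ⁾(c⁻) = q₀⁽ᵐ⁾(c⁺) for every m with 0 ≤ m ≤ j−1. Then, as |k| → ∞ along the real axis, (ik)^{j+1} q̂₀(k) − e^{−ikc}·[q₀⁽ʲ⁾(c)] → 0, where [q₀⁽ʲ⁾(c)] = q₀⁽ʲ⁾(c⁺) − q₀⁽ʲ⁾(c⁻). In particular the leading large-k behavior of q̂₀(k) is e^{−ikc}[q₀⁽ʲ⁾(c)]/(ik)^{j+1}. -/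

import Mathlib

open MeasureTheory Complex Set Filter Topology

/-!
An integrable function with integrable derivative vanishes at `±∞`, so if it jumps at `c` then its
derivative integrates to minus the jump. Applied to `e^{-ikx} f(x)`, where `f` has derivative `g`,
this gives `ik f̂(k) = ĝ(k) + e^{-ikc} [f(c)]`. Iterating over the successive derivatives, only the
jump of the last one survives when the earlier ones match across `c`, and the remaining term, the
transform of `q₀⁽ʲ⁺¹⁾`, tends to zero by the Riemann–Lebesgue lemma.
-/

lemma integrable_of_integrableOn_Iio_of_integrableOn_Ioi {α E : Type*} [LinearOrder α]
    [MeasurableSpace α] {μ : Measure α} [NullSingletonClass μ] [NormedAddCommGroup E]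
    {f : α → E} {c : α} (hlt : IntegrableOn f (Iio c) μ) (hgt : IntegrableOn f (Ioi c) μ) :
    Integrable f μ := by
  simpa only [Iio_union_Ioi, IntegrableOn, restrict_compl_singleton] using hlt.union hgt

lemma hasDerivAt_update_of_ne {𝕜 E : Type*} [NontriviallyNormedField 𝕜] [DecidableEq 𝕜]
    [NormedAddCommGroup E] [NormedSpace 𝕜 E] {f : 𝕜 → E} {f' : E} {c x : 𝕜} (hx : x ≠ c)
    (hf : HasDerivAt f f' x) (a : E) : HasDerivAt (Function.update f c a) f' x :=
  hf.congr_of_eventuallyEq <| (eventually_ne_nhds hx).mono fun _ hy => Function.update_of_ne hy a f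

section OneSidedLimits

variable {E : Type*} [NormedAddCommGroup E] [NormedSpace ℝ E] [CompleteSpace E]
  {f f' : ℝ → E} {c : ℝ} {a b m : E}

lemma integral_Ioi_of_hasDerivAt_of_tendsto_nhdsGT
    (hderiv : ∀ x ∈ Ioi c, HasDerivAt f (f' x) x) (hf' : IntegrableOn f' (Ioi c))
    (hright : Tendsto f (𝓝[>] c) (𝓝 b)) (htop : Tendsto f atTop (𝓝 m)) :
    ∫ x in Ioi c, f' x = m - b := by
  have hcont : ContinuousWithinAt (Function.update f c b) (Ici c) c := by
    rwa [continuousWithinAt_update_same, Ici_sdiff_left]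
  have htop' : Tendsto (Function.update f c b) atTop (𝓝 m) :=
    htop.congr' <| (eventually_ne_atTop c).mono fun _ hx => (Function.update_of_ne hx b f).symm
  simpa only [Function.update_self] using integral_Ioi_of_hasDerivAt_of_tendsto hcont
    (fun x hx => hasDerivAt_update_of_ne (ne_of_gt hx) (hderiv x hx) b) hf' htop'

lemma integral_Iic_of_hasDerivAt_of_tendsto_nhdsLT
    (hderiv : ∀ x ∈ Iio c, HasDerivAt f (f' x) x) (hf' : IntegrableOn f' (Iic c))
    (hleft : Tendsto f (𝓝[<] c) (𝓝 a)) (hbot : Tendsto f atBot (𝓝 m)) :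
    ∫ x in Iic c, f' x = a - m := by
  have hcont : ContinuousWithinAt (Function.update f c a) (Iic c) c := by
    rwa [continuousWithinAt_update_same, Iic_sdiff_right]
  have hbot' : Tendsto (Function.update f c a) atBot (𝓝 m) :=
    hbot.congr' <| (eventually_ne_atBot c).mono fun _ hx => (Function.update_of_ne hx a f).symm
  simpa only [Function.update_self] using integral_Iic_of_hasDerivAt_of_tendsto hcont
    (fun x hx => hasDerivAt_update_of_ne (ne_of_lt hx) (hderiv x hx) a) hf' hbot'

lemma integral_eq_sub_of_hasDerivAt_of_ne_of_integrable
    (hderiv : ∀ x ≠ c, HasDerivAt f (f' x) x) (hf : Integrable f) (hf' : Integrable f')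
    (hleft : Tendsto f (𝓝[<] c) (𝓝 a)) (hright : Tendsto f (𝓝[>] c) (𝓝 b)) :
    ∫ x, f' x = a - b := by
  have htop : Tendsto f atTop (𝓝 0) :=
    tendsto_zero_of_hasDerivAt_of_integrableOn_Ioi (fun x hx => hderiv x (ne_of_gt hx))
      hf'.integrableOn hf.integrableOn
  have hbot : Tendsto f atBot (𝓝 0) :=
    tendsto_zero_of_hasDerivAt_of_integrableOn_Iic (a := c - 1)
      (fun x hx => hderiv x (hx.trans_lt (sub_one_lt c)).ne) hf'.integrableOn hf.integrableOn
  calc ∫ x, f' x = (∫ x in Iic c, f' x) + ∫ x in Ioi c, f' x :=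
        (intervalIntegral.integral_Iic_add_Ioi hf'.integrableOn hf'.integrableOn).symm
    _ = (a - 0) + (0 - b) := by
        rw [integral_Iic_of_hasDerivAt_of_tendsto_nhdsLT (fun x hx => hderiv x (ne_of_lt hx))
            hf'.integrableOn hleft hbot,
          integral_Ioi_of_hasDerivAt_of_tendsto_nhdsGT (fun x hx => hderiv x (ne_of_gt hx))
            hf'.integrableOn hright htop]
    _ = a - b := by abel

end OneSidedLimits

lemma norm_cexp_neg_I_mul (k x : ℝ) : ‖cexp (-I * k * x)‖ = 1 := by
  simp [norm_exp]

lemma continuous_cexp_neg_I_mul (k : ℂ) : Continuous fun x : ℝ => cexp (-I * k * x) := by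
  fun_prop

lemma hasDerivAt_cexp_neg_I_mul (k : ℂ) (x : ℝ) :
    HasDerivAt (fun x : ℝ => cexp (-I * k * x)) (-(I * k) * cexp (-I * k * x)) x := by
  have hlin : HasDerivAt (fun x : ℝ => -I * k * (x : ℂ)) (-I * k) x := by
    simpa only [id, ofReal_one, mul_one] using (hasDerivAt_id x).ofReal_comp.const_mul (-I * k)
  convert hlin.cexp using 1
  ring

section AngularFourier

variable {E : Type*} [NormedAddCommGroup E] [NormedSpace ℂ E]

lemma integrable_cexp_neg_I_mul_smul {μ : Measure ℝ} {f : ℝ → E} (hf : Integrable f μ) (k : ℝ) :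
    Integrable (fun x : ℝ => cexp (-I * k * x) • f x) μ :=
  hf.bdd_smul 1 (continuous_cexp_neg_I_mul k).aestronglyMeasurable
    (ae_of_all _ fun x => (norm_cexp_neg_I_mul k x).le)

/-- The Fourier transform `f̂(k) = ∫ e^{-ikx} f(x) dx` in the angular-frequency normalization, as
opposed to Mathlib's `𝓕`, whose kernel is `e^{-2πikx}`. -/
noncomputable def angularFourier (f : ℝ → E) (k : ℝ) : E :=
  ∫ x : ℝ, cexp (-I * k * x) • f x

open FourierTransform in
lemma angularFourier_eq_fourier (f : ℝ → E) (k : ℝ) :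
    angularFourier f k = 𝓕 f (k * (2 * Real.pi)⁻¹) := by
  have hpi : (Real.pi : ℂ) ≠ 0 := ofReal_ne_zero.mpr Real.pi_ne_zero
  rw [angularFourier, Real.fourier_real_eq_integral_exp_smul]
  congr! 4 with x
  push_cast
  field_simp

lemma tendsto_angularFourier_cocompact (f : ℝ → E) :
    Tendsto (angularFourier f) (cocompact ℝ) (𝓝 0) := by
  have hscale : Tendsto (fun k : ℝ => k * (2 * Real.pi)⁻¹) (cocompact ℝ) (cocompact ℝ) :=
    tendsto_cocompact_mul_right₀ (inv_ne_zero Real.two_pi_pos.ne')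
  exact ((Real.zero_at_infty_fourier f).comp hscale).congr fun k =>
    (angularFourier_eq_fourier f k).symm

variable [CompleteSpace E] {c : ℝ}

lemma I_mul_smul_angularFourier {f f' : ℝ → E} {a b : E}
    (hderiv : ∀ x ≠ c, HasDerivAt f (f' x) x) (hf : Integrable f) (hf' : Integrable f')
    (hleft : Tendsto f (𝓝[<] c) (𝓝 a)) (hright : Tendsto f (𝓝[>] c) (𝓝 b)) (k : ℝ) :
    (I * k) • angularFourier f k = angularFourier f' k + cexp (-I * k * c) • (b - a) := by
  have hint := integrable_cexp_neg_I_mul_smul hf k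
  have hint' := integrable_cexp_neg_I_mul_smul hf' k
  have hexp (s : Set ℝ) :
      Tendsto (fun x : ℝ => cexp (-I * k * x)) (𝓝[s] c) (𝓝 (cexp (-I * k * c))) :=
    (continuous_cexp_neg_I_mul k).continuousWithinAt
  have hprod (x : ℝ) (hx : x ≠ c) : HasDerivAt (fun y : ℝ => cexp (-I * k * y) • f y)
      (cexp (-I * k * x) • f' x - (I * k) • cexp (-I * k * x) • f x) x := by
    have hsmul := (hasDerivAt_cexp_neg_I_mul k x).fun_smul (hderiv x hx)
    rwa [mul_smul, neg_smul, ← sub_eq_add_neg] at hsmul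
  have htotal : angularFourier f' k - (I * k) • angularFourier f k =
      cexp (-I * k * c) • a - cexp (-I * k * c) • b := by
    rw [angularFourier, angularFourier, ← integral_smul, ← integral_sub hint' (hint.fun_smul _)]
    exact integral_eq_sub_of_hasDerivAt_of_ne_of_integrable hprod hint (hint'.sub (hint.smul _))
      ((hexp _).smul hleft) ((hexp _).smul hright)
  rw [smul_sub, ← sub_eq_iff_eq_add', ← neg_sub, htotal, neg_sub]

lemma I_mul_pow_smul_angularFourier {n : ℕ} {d : ℕ → ℝ → E} {L R : ℕ → E}
    (hderiv : ∀ m < n, ∀ x ≠ c, HasDerivAt (d m) (d (m + 1) x) x)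
    (hint : ∀ m ≤ n, Integrable (d m))
    (hleft : ∀ m < n, Tendsto (d m) (𝓝[<] c) (𝓝 (L m)))
    (hright : ∀ m < n, Tendsto (d m) (𝓝[>] c) (𝓝 (R m))) (k : ℝ) :
    (I * k) ^ n • angularFourier (d 0) k = angularFourier (d n) k +
      cexp (-I * k * c) • ∑ m ∈ Finset.range n, (I * k) ^ (n - (m + 1)) • (R m - L m) := by
  induction n generalizing d L R with
  | zero => simp
  | succ n ih =>
    have hparts : (I * k) • angularFourier (d 0) k =
        angularFourier (d 1) k + cexp (-I * k * c) • (R 0 - L 0) :=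
      I_mul_smul_angularFourier (hderiv 0 n.succ_pos) (hint 0 (by lia)) (hint 1 (by lia))
        (hleft 0 n.succ_pos) (hright 0 n.succ_pos) k
    have hshift := ih (d := fun m => d (m + 1)) (L := fun m => L (m + 1)) (R := fun m => R (m + 1))
      (fun m hm => hderiv (m + 1) (by lia)) (fun m hm => hint (m + 1) (by lia))
      (fun m hm => hleft (m + 1) (by lia)) (fun m hm => hright (m + 1) (by lia))
    rw [pow_succ, mul_smul, hparts, smul_add, hshift, smul_comm, add_assoc, ← smul_add,
      Finset.sum_range_succ']
    simp only [Nat.add_sub_add_right, Nat.sub_zero]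

theorem fourier_transform_jump_asymptotics_general {j : ℕ} {d : ℕ → ℝ → E} {L R : ℕ → E}
    (hderiv : ∀ m ≤ j, ∀ x ≠ c, HasDerivAt (d m) (d (m + 1) x) x)
    (hint : ∀ m ≤ j + 1, Integrable (d m))
    (hleft : ∀ m ≤ j, Tendsto (d m) (𝓝[<] c) (𝓝 (L m)))
    (hright : ∀ m ≤ j, Tendsto (d m) (𝓝[>] c) (𝓝 (R m)))
    (hmatch : ∀ m < j, L m = R m) :
    Tendsto (fun k : ℝ => (I * k) ^ (j + 1) • angularFourier (d 0) k -
      cexp (-I * k * c) • (R j - L j)) (cocompact ℝ) (𝓝 0) := by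
  refine (tendsto_angularFourier_cocompact (d (j + 1))).congr fun k => ?_
  have hjumps : ∑ m ∈ Finset.range (j + 1), (I * k : ℂ) ^ (j + 1 - (m + 1)) • (R m - L m) =
      R j - L j := by
    rw [Finset.sum_range_succ, Finset.sum_eq_zero, zero_add, Nat.sub_self, pow_zero, one_smul]
    intro m hm
    rw [hmatch m (Finset.mem_range.mp hm), sub_self, smul_zero]
  rw [I_mul_pow_smul_angularFourier (fun m hm => hderiv m (Nat.le_of_lt_succ hm)) hint
    (fun m hm => hleft m (Nat.le_of_lt_succ hm)) (fun m hm => hright m (Nat.le_of_lt_succ hm)),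
    hjumps, add_sub_cancel_right]

end AngularFourier

/-- Leading large-`k` behavior of the Fourier transform of a function
whose `j`-th derivative has a jump discontinuity at `x = c`:
`(ik)^{j+1} q̂₀(k) − e^{−ikc}·[q₀⁽ʲ⁾(c)] → 0` as `|k| → ∞` along the real axis.
Here `d m` denotes the `m`-th derivative of `q₀` (with `d 0 = q₀`), `Lm m` and `Lp m`
denote the one-sided limits `q₀⁽ᵐ⁾(c⁻)` and `q₀⁽ᵐ⁾(c⁺)` respectively. -/
theorem fourier_transform_jump_asymptotics
    (q₀ : ℝ → ℂ) (c : ℝ) (j : ℕ)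
    (d : ℕ → ℝ → ℂ) (Lm Lp : ℕ → ℂ)
    (hd0 : d 0 = q₀)
    -- q₀ is (j+1)-times differentiable on (−∞,c) and (c,∞),
    -- with m-th derivative d m:
    (hderiv : ∀ m ≤ j, ∀ x ∈ Iio c ∪ Ioi c, HasDerivAt (d m) (d (m + 1) x) x)
    -- all derivatives up to order j+1 are continuous on (−∞,c) and (c,∞):
    (hcont : ∀ m ≤ j + 1, ContinuousOn (d m) (Iio c) ∧ ContinuousOn (d m) (Ioi c))
    -- all derivatives up to order j+1 are integrable on (−∞,c) and (c,∞):
    (hint : ∀ m ≤ j + 1, IntegrableOn (d m) (Iio c) ∧ IntegrableOn (d m) (Ioi c))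
    -- one-sided limits at c exist for derivatives up to order j:
    (hlimL : ∀ m ≤ j, Tendsto (d m) (nhdsWithin c (Iio c)) (nhds (Lm m)))
    (hlimR : ∀ m ≤ j, Tendsto (d m) (nhdsWithin c (Ioi c)) (nhds (Lp m)))
    -- derivatives up to order j vanish at ±∞:
    (hdecay : ∀ m ≤ j, Tendsto (d m) atTop (nhds 0) ∧ Tendsto (d m) atBot (nhds 0))
    -- continuity across c of the derivatives of order ≤ j−1:
    (hmatch : ∀ m, m + 1 ≤ j → Lm m = Lp m) :
    Tendsto
      (fun k : ℝ =>
        (Complex.I * k) ^ (j + 1) * (∫ x : ℝ, Complex.exp (-Complex.I * k * x) * q₀ x)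
          - Complex.exp (-Complex.I * k * c) * (Lp j - Lm j))
      (Filter.cocompact ℝ) (nhds 0) := by
  subst hd0
  exact fourier_transform_jump_asymptotics_general
    (fun m hm x hx => hderiv m hm x (lt_or_gt_of_ne hx))
    (fun m hm => integrable_of_integrableOn_Iio_of_integrableOn_Ioi (hint m hm).1 (hint m hm).2)
    hlimL hlimR hmatch
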